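/- Let X and Y be independent real-valued random variables with X ~ N(μX, σX²) and Y ~ N(μY, σY²), where σX, σY > 0. Set α = √(σX² + σY²) and β = (μX − μY)/α. Then E[max(X, Y)] = μX·Φ(β) + μY·Φ(−β) + α·φ(β), where φ(x) = exp(−x²/2)/√(2π) is the standard normal density and Φ is its cumulative distribution function. -/

import Mathlib

open MeasureTheory ProbabilityTheory

/-- The standard normal density `φ(x) = exp(−x²/2)/√(2π)`. -/
noncomputable def stdNormalPDF (x : ℝ) : ℝ :=
  Real.exp (-x ^ 2 / 2) / Real.sqrt (2 * Real.pi)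

/-- The standard normal cumulative distribution function `Φ(x) = ∫_{−∞}^{x} φ(t) dt`. -/
noncomputable def stdNormalCDF (x : ℝ) : ℝ :=
  ∫ t in Set.Iic x, stdNormalPDF t

lemma aux_pdf_eq : stdNormalPDF = gaussianPDFReal 0 1 := by
  ext x
  simp [stdNormalPDF, gaussianPDFReal, div_eq_inv_mul]

lemma aux_int : Integrable stdNormalPDF := by
  rw [aux_pdf_eq]; exact integrable_gaussianPDFReal 0 1

lemma aux_even (x : ℝ) : stdNormalPDF (-x) = stdNormalPDF x := by
  simp [stdNormalPDF]

lemma aux_int_mul : Integrable (fun x => x * stdNormalPDF x) := by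
  have h := (integrable_mul_exp_neg_mul_sq (b := 1 / 2) (by norm_num)).div_const
    (Real.sqrt (2 * Real.pi))
  refine h.congr (Filter.Eventually.of_forall fun x => ?_)
  simp only [stdNormalPDF]
  rw [show -(1 / 2) * x ^ 2 = -x ^ 2 / 2 by ring]
  ring

lemma aux_cdf (b : ℝ) : ∫ t in Set.Ioi (-b), stdNormalPDF t = stdNormalCDF b := by
  rw [← integral_comp_neg_Iic]
  simp only [aux_even, stdNormalCDF]

lemma aux_cdf_neg (b : ℝ) : stdNormalCDF (-b) = 1 - stdNormalCDF b := by
  have h := integral_add_compl (measurableSet_Iic (a := -b)) aux_int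
  rw [Set.compl_Iic, aux_cdf] at h
  have h1 : ∫ x, stdNormalPDF x = 1 := by
    rw [aux_pdf_eq]; exact integral_gaussianPDFReal_eq_one 0 one_ne_zero
  rw [h1] at h
  have h2 : stdNormalCDF (-b) = ∫ t in Set.Iic (-b), stdNormalPDF t := rfl
  linarith

lemma aux_first (a : ℝ) : ∫ t in Set.Ioi a, t * stdNormalPDF t = stdNormalPDF a := by
  have h := integral_Ioi_of_hasDerivAt_of_tendsto' (a := a) (m := 0)
    (f := fun x => -stdNormalPDF x) (f' := fun x => x * stdNormalPDF x) ?_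
    aux_int_mul.integrableOn ?_
  · rw [h]; ring
  · intro x _
    have h1 : HasDerivAt (fun x : ℝ => -x ^ 2 / 2) (-x) x := by
      have := ((hasDerivAt_pow 2 x).neg).div_const 2
      refine HasDerivAt.congr_deriv this ?_
      norm_num
      ring
    have h2 := (h1.exp.div_const (Real.sqrt (2 * Real.pi))).neg
    refine HasDerivAt.congr_deriv h2 ?_
    simp only [stdNormalPDF]
    ring
  · have h1 : Filter.Tendsto (fun x : ℝ => -x ^ 2 / 2) Filter.atTop Filter.atBot := by
      have := (Filter.tendsto_pow_atTop (α := ℝ) (n := 2) two_ne_zero).atTop_div_const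
        (r := 2) two_pos
      refine (Filter.tendsto_neg_atTop_atBot.comp this).congr fun x => ?_
      simp [neg_div]
    have h2 := ((Real.tendsto_exp_atBot.comp h1).div_const (Real.sqrt (2 * Real.pi))).neg
    simpa [stdNormalPDF] using h2

lemma aux_pos_part (b : ℝ) :
    ∫ z, max (z + b) 0 ∂(gaussianReal 0 1) = b * stdNormalCDF b + stdNormalPDF b := by
  rw [integral_gaussianReal_eq_integral_smul one_ne_zero, ← aux_pdf_eq]
  have h : (fun z => stdNormalPDF z • max (z + b) 0) =
      Set.indicator (Set.Ioi (-b)) (fun z => z * stdNormalPDF z + b * stdNormalPDF z) := by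
    ext z
    by_cases hz : z ∈ Set.Ioi (-b)
    · rw [Set.indicator_of_mem hz, max_eq_left (by rw [Set.mem_Ioi] at hz; linarith)]
      simp only [smul_eq_mul]; ring
    · rw [Set.indicator_of_notMem hz, max_eq_right (by rw [Set.mem_Ioi] at hz; linarith)]
      simp
  rw [h, integral_indicator measurableSet_Ioi,
    integral_add aux_int_mul.integrableOn (aux_int.const_mul b).integrableOn,
    integral_const_mul, aux_first, aux_cdf, aux_even]
  ring

lemma aux_integrable {Ω : Type*} [MeasurableSpace Ω] {P : Measure Ω} {X : Ω → ℝ}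
    (hX : Measurable X) {m : ℝ} {v : NNReal} (h : Measure.map X P = gaussianReal m v) :
    Integrable X P ∧ ∫ ω, X ω ∂P = m := by
  have h1 : Integrable (id : ℝ → ℝ) (gaussianReal m v) :=
    memLp_one_iff_integrable.mp (memLp_id_gaussianReal 1)
  rw [← h] at h1
  refine ⟨h1.comp_measurable hX, ?_⟩
  rw [← integral_id_gaussianReal (μ := m) (v := v), ← h,
    integral_map hX.aemeasurable (by fun_prop)]

/-- Clark's formula for the mean of the maximum of two independent Gaussian random
variables: `E[max(X,Y)] = μX Φ(β) + μY Φ(−β) + α φ(β)` where `α = √(σX² + σY²)` and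
`β = (μX − μY)/α`. -/
theorem mean_max_of_gaussian
    {Ω : Type*} [MeasurableSpace Ω] (P : Measure Ω) [IsProbabilityMeasure P]
    (X Y : Ω → ℝ) (hX : Measurable X) (hY : Measurable Y)
    (μX μY σX σY : ℝ) (hσX : 0 < σX) (hσY : 0 < σY)
    (hXd : Measure.map X P = gaussianReal μX (σX ^ 2).toNNReal)
    (hYd : Measure.map Y P = gaussianReal μY (σY ^ 2).toNNReal)
    (hindep : IndepFun X Y P)
    (α β : ℝ) (hα : α = Real.sqrt (σX ^ 2 + σY ^ 2)) (hβ : β = (μX - μY) / α) :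
    ∫ ω, max (X ω) (Y ω) ∂P =
      μX * stdNormalCDF β + μY * stdNormalCDF (-β) + α * stdNormalPDF β := by
  have hs : 0 < σX ^ 2 + σY ^ 2 := by positivity
  have hα0 : 0 < α := by rw [hα]; exact Real.sqrt_pos.mpr hs
  have hα2 : α ^ 2 = σX ^ 2 + σY ^ 2 := by rw [hα]; exact Real.sq_sqrt hs.le
  have hm : α * β = μX - μY := by rw [hβ]; field_simp
  have hnY : Measure.map (fun ω => -Y ω) P = gaussianReal (-μY) (σY ^ 2).toNNReal := by
    rw [← gaussianReal_map_neg, ← hYd, Measure.map_map measurable_neg hY]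
    rfl
  have hD := gaussianReal_add_gaussianReal_of_indepFun
    (hindep.comp measurable_id measurable_neg) hXd hnY
  have hZ : Measure.map (fun z => α * (z + β)) (gaussianReal 0 1) =
      gaussianReal (μX + -μY) ((σX ^ 2).toNNReal + (σY ^ 2).toNNReal) := by
    have e : (fun z => α * (z + β)) = (fun z => α * z) ∘ (fun z => z + β) := rfl
    rw [e, ← Measure.map_map (by fun_prop) (by fun_prop), gaussianReal_map_add_const,
      gaussianReal_map_const_mul]
    congr 1
    · rw [zero_add, hm]; ring
    · ext
      simp [hα2, Real.coe_toNNReal _ (sq_nonneg _)]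
  obtain ⟨iX, -⟩ := aux_integrable hX hXd
  obtain ⟨iY, eY⟩ := aux_integrable hY hYd
  have e1 : ∀ ω, max (X ω) (Y ω) = Y ω + max (X ω - Y ω) 0 := by
    intro ω
    rw [← max_add_add_left]; simp
  have iM : Integrable (fun ω => max (X ω - Y ω) 0) P := (iX.sub iY).pos_part
  have eD : ∫ ω, max (X ω - Y ω) 0 ∂P = α * (β * stdNormalCDF β + stdNormalPDF β) := by
    have a1 : ∫ ω, max (X ω - Y ω) 0 ∂P =
        ∫ x, max x 0 ∂(Measure.map (X + fun ω => -Y ω) P) := by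
      rw [integral_map (by fun_prop) (by fun_prop)]
      simp [sub_eq_add_neg]
    rw [a1]
    have a2 := hD.trans hZ.symm
    have a3 : Measure.map (X + fun ω => -Y ω) P =
      Measure.map (fun z => α * (z + β)) (gaussianReal 0 1) := a2
    rw [a3, integral_map (by fun_prop) (by fun_prop), ← aux_pos_part, ← integral_const_mul]
    congr 1
    ext z
    rw [mul_max_of_nonneg _ _ hα0.le, mul_zero]
  simp_rw [e1]
  rw [integral_add iY iM, eY, eD, aux_cdf_neg]
  linear_combination stdNormalCDF β * hm
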